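/- Let B be an indefinite real symmetric 3×3 matrix. Then the slice S_B = {A ∈ S₊³ : tr(AB) = 0} is second-order cone representable if and only if det(B) = 0. -/

import Mathlib

/-! The slice `S_B` depends, up to a linear isomorphism, only on the congruence class of `B`
(`isSOCR_congr`), so `B` may be taken to be `diagonal ![1, -1, c]` with `c ∈ {0, 1, -1}`
(`exists_normal_form`), and then `det B = 0` means `c = 0`.

If `c = 0`, then after another congruence `S_B` consists of the psd matrices `A` with `A 0 1 = 0`.
By a Schur complement, each of these is the sum of a psd matrix supported on the indices `{0, 2}`
and one supported on `{1, 2}`, and psd `2 × 2` matrices form a Lorentz cone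
(`isSOCR_hyperbolicPlane`).

If `c ≠ 0`, then `S_B` contains the rank-one matrices `v vᵀ` for `v` on a nondegenerate conic, and
any three different points `v` of the parametrized conic are linearly independent. Suppose that
`S_B = f (Qᵐ ∩ W)`, and lift infinitely many `v vᵀ` to points `y ∈ Qᵐ ∩ W`. By the infinite
pigeonhole principle, one may pass to infinitely many `y` such that in each of the `m` coordinates
either all vanish, or all lie on one ray, or all lie on pairwise different rays. In each case
`y i + y j - δ • y k` remains in `Qᵐ ∩ W` for small `δ > 0`; in the third one because the sum of
points on two different rays of `Q` is an interior point. Applying `f`, the matrix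
`v_i v_iᵀ + v_j v_jᵀ - δ v_k v_kᵀ` is psd (`IsSOCR.exists_sub_mem`), although it is negative on a
vector orthogonal to `v_i` and `v_j` but not to `v_k` (`not_isSOCR_of_isotropic`). -/

open Matrix

noncomputable section

/-- The three-dimensional Lorentz cone `Q = {x ∈ ℝ³ : x₃ ≥ √(x₁² + x₂²)}`. -/
def lorentzCone : Set (Fin 3 → ℝ) :=
  {x | Real.sqrt (x 0 ^ 2 + x 1 ^ 2) ≤ x 2}

/-- The `m`-fold Cartesian power `Qᵐ ⊆ (ℝ³)ᵐ` of the Lorentz cone. -/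
def lorentzPow (m : ℕ) : Set (Fin m → Fin 3 → ℝ) :=
  {x | ∀ i, x i ∈ lorentzCone}

/-- The cone of real symmetric positive semidefinite `k × k` matrices. -/
def psdCone (k : ℕ) : Set (Matrix (Fin k) (Fin k) ℝ) :=
  {A | A.PosSemidef}

/-- For `B ∈ Sᵏ`, the slice `S_B = {A ∈ S₊ᵏ : tr(AB) = 0}` of the psd cone
orthogonal to `B` w.r.t. the trace scalar product. -/
def sliceOrth (k : ℕ) (B : Matrix (Fin k) (Fin k) ℝ) : Set (Matrix (Fin k) (Fin k) ℝ) :=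
  {A | A.PosSemidef ∧ Matrix.trace (A * B) = 0}

/-- `S` is a slice of `S₊ᵏ`: the intersection of the psd cone with a linear
subspace of the space of symmetric matrices. -/
def IsSlice (k : ℕ) (S : Set (Matrix (Fin k) (Fin k) ℝ)) : Prop :=
  ∃ L : Submodule ℝ (Matrix (Fin k) (Fin k) ℝ),
    (∀ A ∈ L, A.IsSymm) ∧ S = psdCone k ∩ (L : Set (Matrix (Fin k) (Fin k) ℝ))

/-- A set `S` in a real vector space is second-order cone representable (socr)
if it is the image under a linear map of the intersection of `Qᵐ` with a
linear subspace of `(ℝ³)ᵐ`, for some positive integer `m`. -/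
def IsSOCR {V : Type*} [AddCommGroup V] [Module ℝ V] (S : Set V) : Prop :=
  ∃ m : ℕ, 0 < m ∧ ∃ W : Submodule ℝ (Fin m → Fin 3 → ℝ),
    ∃ f : (Fin m → Fin 3 → ℝ) →ₗ[ℝ] V,
      S = f '' (lorentzPow m ∩ (W : Set (Fin m → Fin 3 → ℝ)))

/-- A symmetric matrix is indefinite if it is neither positive semidefinite
nor negative semidefinite. -/
def Indefinite (k : ℕ) (B : Matrix (Fin k) (Fin k) ℝ) : Prop :=
  ¬ B.PosSemidef ∧ ¬ (-B).PosSemidef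

/-! ### Points of the Lorentz cone -/

lemma mem_lorentzCone_iff (x : Fin 3 → ℝ) :
    x ∈ lorentzCone ↔ 0 ≤ x 2 ∧ x 0 ^ 2 + x 1 ^ 2 ≤ x 2 ^ 2 :=
  Real.sqrt_le_iff

lemma smul_mem_lorentzCone {x : Fin 3 → ℝ} (hx : x ∈ lorentzCone) {a : ℝ} (ha : 0 ≤ a) :
    a • x ∈ lorentzCone := by
  rw [mem_lorentzCone_iff] at hx ⊢
  simp only [Pi.smul_apply, smul_eq_mul]
  refine ⟨mul_nonneg ha hx.1, ?_⟩
  nlinarith [mul_le_mul_of_nonneg_left hx.2 (sq_nonneg a)]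

lemma eq_zero_of_mem_lorentzCone {x : Fin 3 → ℝ} (hx : x ∈ lorentzCone) (h : x 2 = 0) :
    x = 0 := by
  rw [mem_lorentzCone_iff, h] at hx
  have h0 : x 0 = 0 := by nlinarith [sq_nonneg (x 0), sq_nonneg (x 1)]
  have h1 : x 1 = 0 := by nlinarith [sq_nonneg (x 0), sq_nonneg (x 1)]
  ext i
  fin_cases i <;> simp [h0, h1, h]

/-- A point of the interior of the Lorentz cone can be moved a little in any direction. -/
lemma eventually_sub_smul_mem {r : Fin 3 → ℝ} (h2 : 0 < r 2)
    (hr : r 0 ^ 2 + r 1 ^ 2 < r 2 ^ 2) (s : Fin 3 → ℝ) :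
    ∀ᶠ δ : ℝ in nhdsWithin 0 (Set.Ioi 0), r - δ • s ∈ lorentzCone := by
  apply Filter.Eventually.filter_mono nhdsWithin_le_nhds
  have c1 : ContinuousAt (fun δ : ℝ => r 2 - δ * s 2) 0 := by fun_prop
  have c2 : ContinuousAt (fun δ : ℝ => (r 2 - δ * s 2) ^ 2
      - ((r 0 - δ * s 0) ^ 2 + (r 1 - δ * s 1) ^ 2)) 0 := by fun_prop
  have e1 := c1.eventually (lt_mem_nhds (a := 0) (by simpa using h2))
  have e2 := c2.eventually (lt_mem_nhds (a := 0) (by simpa using hr))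
  filter_upwards [e1, e2] with δ h h'
  rw [mem_lorentzCone_iff]
  simp only [Pi.sub_apply, Pi.smul_apply, smul_eq_mul]
  exact ⟨h.le, by linarith⟩

/-- Strict convexity of the unit disc: two points of the Lorentz cone on different rays add up to
an interior point. The map `x ↦ (x 2)⁻¹ • x` tells the rays apart. -/
lemma add_interior {x y : Fin 3 → ℝ} (hx : x ∈ lorentzCone) (hy : y ∈ lorentzCone)
    (hx2 : x 2 ≠ 0) (hy2 : y 2 ≠ 0) (hne : (x 2)⁻¹ • x ≠ (y 2)⁻¹ • y) :
    0 < (x + y) 2 ∧ (x + y) 0 ^ 2 + (x + y) 1 ^ 2 < (x + y) 2 ^ 2 := by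
  rw [mem_lorentzCone_iff] at hx hy
  have px : 0 < x 2 := lt_of_le_of_ne hx.1 hx2.symm
  have py : 0 < y 2 := lt_of_le_of_ne hy.1 hy2.symm
  have key : 0 < (y 2 * x 0 - x 2 * y 0) ^ 2 + (y 2 * x 1 - x 2 * y 1) ^ 2 := by
    by_contra hcon
    have h0 : y 2 * x 0 - x 2 * y 0 = 0 := by
      nlinarith [sq_nonneg (y 2 * x 0 - x 2 * y 0), sq_nonneg (y 2 * x 1 - x 2 * y 1)]
    have h1 : y 2 * x 1 - x 2 * y 1 = 0 := by
      nlinarith [sq_nonneg (y 2 * x 0 - x 2 * y 0), sq_nonneg (y 2 * x 1 - x 2 * y 1)]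
    apply hne
    ext i
    fin_cases i <;> simp <;> field_simp <;> linarith
  have hmul : 0 < (x 2 * y 2) * (x 2 * y 2 - (x 0 * y 0 + x 1 * y 1)) := by
    nlinarith [mul_le_mul_of_nonneg_left hx.2 (sq_nonneg (y 2)),
      mul_le_mul_of_nonneg_left hy.2 (sq_nonneg (x 2))]
  have hlt := pos_of_mul_pos_right hmul (mul_pos px py).le
  simp only [Pi.add_apply]
  exact ⟨by linarith, by nlinarith [hx.2, hy.2]⟩

/-! ### Infinite families in a second-order cone representable set -/

lemma exists_infinite_fiber_or_injOn {β : Type*} (g : ℕ → β) {T : Set ℕ} (hT : T.Infinite) :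
    ∃ T' ⊆ T, T'.Infinite ∧ ((∃ d, ∀ n ∈ T', g n = d) ∨ Set.InjOn g T') := by
  by_cases hfin : (g '' T).Finite
  · obtain ⟨d, hd⟩ : ∃ d, (T ∩ g ⁻¹' {d}).Infinite := by
      by_contra! h
      refine hT ((hfin.biUnion fun d _ => h d).subset fun n hn => ?_)
      exact Set.mem_biUnion (Set.mem_image_of_mem g hn) ⟨hn, rfl⟩
    exact ⟨_, Set.inter_subset_left, hd, Or.inl ⟨d, fun n hn => hn.2⟩⟩
  · obtain ⟨T', hsub, hbij⟩ := Set.exists_subset_bijOn T g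
    refine ⟨T', hsub, fun hf => hfin ?_, Or.inr hbij.injOn⟩
    rw [← hbij.image_eq]
    exact hf.image g

/-- `y i + y j` stays in the Lorentz cone after subtracting small multiples of `y k`, for all
`i, j, k` in `T` with `i ≠ j`. -/
def Absorbing (y : ℕ → Fin 3 → ℝ) (T : Set ℕ) : Prop :=
  ∀ i ∈ T, ∀ j ∈ T, ∀ k ∈ T, i ≠ j →
    ∀ᶠ δ : ℝ in nhdsWithin 0 (Set.Ioi 0), y i + y j - δ • y k ∈ lorentzCone

lemma Absorbing.mono {y : ℕ → Fin 3 → ℝ} {T T' : Set ℕ} (h : Absorbing y T) (hs : T' ⊆ T) :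
    Absorbing y T' :=
  fun i hi j hj k hk => h i (hs hi) j (hs hj) k (hs hk)

/-- Infinitely many points of the Lorentz cone contain infinitely many that vanish, or lie on one
ray, or lie on pairwise different rays; each of these subfamilies is absorbing. -/
lemma exists_absorbing {y : ℕ → Fin 3 → ℝ} (hy : ∀ n, y n ∈ lorentzCone) {T : Set ℕ}
    (hT : T.Infinite) : ∃ T' ⊆ T, T'.Infinite ∧ Absorbing y T' := by
  by_cases hz : (T ∩ {n | y n 2 = 0}).Infinite
  · refine ⟨_, Set.inter_subset_left, hz, ?_⟩
    rintro i ⟨-, hi⟩ j ⟨-, hj⟩ k ⟨-, hk⟩ -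
    refine Filter.Eventually.of_forall fun δ => ?_
    rw [eq_zero_of_mem_lorentzCone (hy i) hi, eq_zero_of_mem_lorentzCone (hy j) hj,
      eq_zero_of_mem_lorentzCone (hy k) hk, mem_lorentzCone_iff]
    simp
  have hT1 : (T \ {n | y n 2 = 0}).Infinite := by
    intro hf
    apply hT
    rw [← Set.inter_union_sdiff T {n | y n 2 = 0}]
    exact (Set.not_infinite.mp hz).union hf
  obtain ⟨T', hsub, hinf, h⟩ := exists_infinite_fiber_or_injOn (fun n => (y n 2)⁻¹ • y n) hT1
  refine ⟨T', hsub.trans Set.sdiff_subset, hinf, ?_⟩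
  intro i hi j hj k hk hij
  have ne : ∀ n ∈ T', y n 2 ≠ 0 := fun n hn => (hsub hn).2
  rcases h with ⟨d, hd⟩ | hinj
  · have hray : ∀ n ∈ T', y n = y n 2 • d := by
      intro n hn
      rw [← hd n hn, smul_smul, mul_inv_cancel₀ (ne n hn), one_smul]
    have pos : ∀ n ∈ T', 0 < y n 2 := fun n hn =>
      lt_of_le_of_ne ((mem_lorentzCone_iff _).1 (hy n)).1 (ne n hn).symm
    have hdQ : d ∈ lorentzCone := by
      rw [← hd i hi]
      exact smul_mem_lorentzCone (hy i) (inv_nonneg.2 (pos i hi).le)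
    have c : ContinuousAt (fun δ : ℝ => y i 2 + y j 2 - δ * y k 2) 0 := by fun_prop
    have e := c.eventually (lt_mem_nhds (a := 0) (by
      simpa using add_pos (pos i hi) (pos j hj)))
    filter_upwards [e.filter_mono nhdsWithin_le_nhds] with δ hδ
    have : y i + y j - δ • y k = (y i 2 + y j 2 - δ * y k 2) • d := by
      conv_lhs => rw [hray i hi, hray j hj, hray k hk]
      rw [smul_smul, sub_smul, add_smul]
    rw [this]
    exact smul_mem_lorentzCone hdQ hδ.le
  · obtain ⟨h1, h2⟩ := add_interior (hy i) (hy j) (ne i hi) (ne j hj)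
      (fun he => hij (hinj hi hj he))
    exact eventually_sub_smul_mem h1 h2 _

lemma exists_absorbing_finset {m : ℕ} {y : ℕ → Fin m → Fin 3 → ℝ}
    (hy : ∀ n l, y n l ∈ lorentzCone) (F : Finset (Fin m)) :
    ∃ T : Set ℕ, T.Infinite ∧ ∀ l ∈ F, Absorbing (fun n => y n l) T := by
  induction F using Finset.induction_on with
  | empty => exact ⟨Set.univ, Set.infinite_univ, by simp⟩
  | insert a F _ ih =>
    obtain ⟨T, hT, h⟩ := ih
    obtain ⟨T', hsub, hT', h'⟩ := exists_absorbing (fun n => hy n a) hT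
    refine ⟨T', hT', fun l hl => ?_⟩
    rcases Finset.mem_insert.1 hl with rfl | hl
    · exact h'
    · exact (h l hl).mono hsub

/-- The obstruction to second-order cone representability: every sequence in a representable set
has three members such that a small multiple of one can be subtracted from the sum of the other
two without leaving the set. -/
lemma IsSOCR.exists_sub_mem {V : Type*} [AddCommGroup V] [Module ℝ V] {S : Set V}
    (hS : IsSOCR S) (x : ℕ → V) (hx : ∀ n, x n ∈ S) :
    ∃ i j k : ℕ, i ≠ j ∧ i ≠ k ∧ j ≠ k ∧ ∃ δ : ℝ, 0 < δ ∧ x i + x j - δ • x k ∈ S := by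
  obtain ⟨m, -, W, f, rfl⟩ := hS
  choose y hy hfy using hx
  obtain ⟨T, hT, h⟩ := exists_absorbing_finset (fun n l => (hy n).1 l) Finset.univ
  obtain ⟨i, hi, -⟩ := hT.exists_gt 0
  obtain ⟨j, hj, hij⟩ := hT.exists_gt i
  obtain ⟨k, hk, hjk⟩ := hT.exists_gt j
  have ev : ∀ᶠ δ : ℝ in nhdsWithin 0 (Set.Ioi 0), ∀ l, y i l + y j l - δ • y k l ∈ lorentzCone :=
    Filter.eventually_all.2 fun l => h l (Finset.mem_univ l) i hi j hj k hk hij.ne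
  obtain ⟨δ, hδ, hpos⟩ := (ev.and self_mem_nhdsWithin).exists
  refine ⟨i, j, k, hij.ne, (hij.trans hjk).ne, hjk.ne, δ, hpos,
    y i + y j - δ • y k, ⟨hδ, ?_⟩, ?_⟩
  · exact W.sub_mem (W.add_mem (hy i).2 (hy j).2) (W.smul_mem _ (hy k).2)
  · simp [hfy]

lemma IsSOCR.image {V V' : Type*} [AddCommGroup V] [Module ℝ V] [AddCommGroup V'] [Module ℝ V']
    {S : Set V} (hS : IsSOCR S) (g : V →ₗ[ℝ] V') : IsSOCR (g '' S) := by
  obtain ⟨m, hm, W, f, rfl⟩ := hS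
  exact ⟨m, hm, W, g ∘ₗ f, by rw [LinearMap.coe_comp, Set.image_comp]⟩

/-! ### The nondegenerate case -/

/-- A slice through infinitely many rank-one matrices `v vᵀ`, with any three of the vectors `v`
linearly independent, is not second-order cone representable. The vector `z` below witnesses that
`v k` is not in the span of `v i` and `v j`. -/
lemma not_isSOCR_of_isotropic {B : Matrix (Fin 3) (Fin 3) ℝ} (v : ℕ → Fin 3 → ℝ)
    (hv : ∀ n, v n ⬝ᵥ (B *ᵥ v n) = 0)
    (hz : ∀ i j k : ℕ, i ≠ k → j ≠ k → ∃ z : Fin 3 → ℝ,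
      z ⬝ᵥ v i = 0 ∧ z ⬝ᵥ v j = 0 ∧ z ⬝ᵥ v k ≠ 0) :
    ¬ IsSOCR (sliceOrth 3 B) := by
  intro hS
  obtain ⟨i, j, k, -, hik, hjk, δ, hδ, hmem⟩ :=
    hS.exists_sub_mem (fun n => vecMulVec (v n) (v n)) fun n => by
      refine ⟨by simpa using posSemidef_vecMulVec_self_star (v n), ?_⟩
      rw [vecMulVec_mul, trace_vecMulVec, dotProduct_comm, ← dotProduct_mulVec, hv]
  obtain ⟨z, hi, hj, hk⟩ := hz i j k hik hjk
  have h := hmem.1.dotProduct_mulVec_nonneg z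
  simp only [star_trivial, sub_mulVec, add_mulVec, smul_mulVec, vecMulVec_mulVec,
    dotProduct_sub, dotProduct_add, dotProduct_smul, hi, hj] at h
  simp only [dotProduct_comm _ z, hi, hj] at h
  simp at h
  exact absurd h (not_le.2 (mul_pos hδ (mul_self_pos.2 hk)))

lemma not_isSOCR_diagonal_one : ¬ IsSOCR (sliceOrth 3 (diagonal ![1, -1, 1])) := by
  refine not_isSOCR_of_isotropic (fun n => ![2 * n, 1 + n ^ 2, 1 - n ^ 2]) ?_ ?_
  · intro n
    simp [dotProduct, Fin.sum_univ_three, mulVec_diagonal]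
    ring
  · intro i j k hik hjk
    -- `z` pairs with the point of parameter `t` to `(t - i) * (t - j)`.
    refine ⟨![-(i + j) / 2, (1 + i * j) / 2, (i * j - 1) / 2], ?_, ?_, ?_⟩
    · simp [dotProduct, Fin.sum_univ_three]
      ring
    · simp [dotProduct, Fin.sum_univ_three]
      ring
    · have h : ((k : ℝ) - i) * (k - j) ≠ 0 :=
        mul_ne_zero (sub_ne_zero.2 (by exact_mod_cast hik.symm))
          (sub_ne_zero.2 (by exact_mod_cast hjk.symm))
      intro h0
      apply h
      rw [← h0]
      simp [dotProduct, Fin.sum_univ_three]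
      ring

lemma not_isSOCR_diagonal_neg_one : ¬ IsSOCR (sliceOrth 3 (diagonal ![1, -1, -1])) := by
  refine not_isSOCR_of_isotropic (fun n => ![1 + n ^ 2, 2 * n, 1 - n ^ 2]) ?_ ?_
  · intro n
    simp [dotProduct, Fin.sum_univ_three, mulVec_diagonal]
    ring
  · intro i j k hik hjk
    -- `z` pairs with the point of parameter `t` to `(t - i) * (t - j)`.
    refine ⟨![(1 + i * j) / 2, -(i + j) / 2, (i * j - 1) / 2], ?_, ?_, ?_⟩
    · simp [dotProduct, Fin.sum_univ_three]
      ring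
    · simp [dotProduct, Fin.sum_univ_three]
      ring
    · have h : ((k : ℝ) - i) * (k - j) ≠ 0 :=
        mul_ne_zero (sub_ne_zero.2 (by exact_mod_cast hik.symm))
          (sub_ne_zero.2 (by exact_mod_cast hjk.symm))
      intro h0
      apply h
      rw [← h0]
      simp [dotProduct, Fin.sum_univ_three]
      ring

/-! ### The degenerate case -/

/-- Twice the quadratic form `2 x₀ x₁`; its slice consists of the psd matrices with vanishing
`(0, 1)` entry. -/
def hyperbolicPlane : Matrix (Fin 3) (Fin 3) ℝ := !![0, 2, 0; 2, 0, 0; 0, 0, 0]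

/-- The linear map sending a pair of Lorentz vectors, viewed as the symmetric `2 × 2` matrices
`!![x 2 + x 0, x 1; x 1, x 2 - x 0]`, to the sum of their placements on the index sets `{0, 2}`
and `{1, 2}`. -/
def glue : (Fin 2 → Fin 3 → ℝ) →ₗ[ℝ] Matrix (Fin 3) (Fin 3) ℝ where
  toFun x := !![x 0 2 + x 0 0, 0, x 0 1;
    0, x 1 2 + x 1 0, x 1 1;
    x 0 1, x 1 1, (x 0 2 - x 0 0) + (x 1 2 - x 1 0)]
  map_add' x y := by
    ext i j
    fin_cases i <;> fin_cases j <;> simp <;> ring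
  map_smul' a x := by
    ext i j
    fin_cases i <;> fin_cases j <;> simp <;> ring

lemma binary_form_nonneg {x : Fin 3 → ℝ} (hx : x ∈ lorentzCone) (s t : ℝ) :
    0 ≤ (x 2 + x 0) * s ^ 2 + 2 * x 1 * s * t + (x 2 - x 0) * t ^ 2 := by
  rw [mem_lorentzCone_iff] at hx
  obtain ⟨h0, h⟩ := hx
  have h1 : (x 0 * (s ^ 2 - t ^ 2) + x 1 * (2 * s * t)) ^ 2 ≤ (x 2 * (s ^ 2 + t ^ 2)) ^ 2 := by
    nlinarith [sq_nonneg (x 0 * (2 * s * t) - x 1 * (s ^ 2 - t ^ 2)),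
      mul_le_mul_of_nonneg_right h (sq_nonneg (s ^ 2 + t ^ 2))]
  have h2 := abs_le_of_sq_le_sq' h1 (by positivity)
  nlinarith [h2.1]

lemma mem_lorentzCone_of_binary {a b e : ℝ} (ha : 0 ≤ a) (he : 0 ≤ e) (h : b ^ 2 ≤ a * e) :
    ![(a - e) / 2, b, (a + e) / 2] ∈ lorentzCone := by
  rw [mem_lorentzCone_iff]
  simp
  exact ⟨by positivity, by nlinarith⟩

lemma isSOCR_hyperbolicPlane : IsSOCR (sliceOrth 3 hyperbolicPlane) := by
  refine ⟨2, two_pos, ⊤, glue, Set.Subset.antisymm ?_ ?_⟩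
  · rintro A ⟨hA, htr⟩
    have hsym : ∀ i j, A i j = A j i := fun i j => by simpa using hA.1.apply j i
    have h01 : A 0 1 = 0 := by
      simp [hyperbolicPlane, trace, Fin.sum_univ_three, mul_apply, hsym 1 0] at htr
      linarith
    have ha : 0 ≤ A 0 0 := hA.diag_nonneg
    have hc : 0 ≤ A 1 1 := hA.diag_nonneg
    have he : 0 ≤ A 2 2 := hA.diag_nonneg
    have hb := (hA.submatrix ![0, 2]).det_nonneg
    have hd := (hA.submatrix ![1, 2]).det_nonneg
    have hdet := hA.det_nonneg
    rw [det_fin_two] at hb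
    simp [hsym 2 0] at hb
    rw [det_fin_two] at hd
    simp [hsym 2 1] at hd
    simp [det_fin_three, hsym 2 1, hsym 2 0, hsym 1 0, h01] at hdet
    -- Schur complement: give the first block the least possible lower right entry. If `A 0 0 = 0`,
    -- the quotient takes the junk value `0`, which is the right one as then `A 0 2 = 0`.
    obtain ⟨e, he0, hae, he2, hce⟩ : ∃ e : ℝ, 0 ≤ e ∧ A 0 2 ^ 2 ≤ A 0 0 * e ∧ 0 ≤ A 2 2 - e ∧
        A 1 2 ^ 2 ≤ A 1 1 * (A 2 2 - e) := by
      refine ⟨A 0 2 ^ 2 / A 0 0, by positivity, ?_⟩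
      rcases ha.eq_or_lt with h | h
      · rw [← h] at hb ⊢
        simp
        refine ⟨?_, he, ?_⟩ <;> nlinarith
      · refine ⟨by field_simp; rfl, ?_, ?_⟩
        · rw [sub_nonneg, div_le_iff₀ h]
          nlinarith
        · have : A 1 1 * (A 2 2 - A 0 2 ^ 2 / A 0 0)
              = (A 1 1 * (A 0 0 * A 2 2 - A 0 2 ^ 2)) / A 0 0 := by
            field_simp
          rw [this, le_div_iff₀ h]
          nlinarith
    refine ⟨![![(A 0 0 - e) / 2, A 0 2, (A 0 0 + e) / 2],
      ![(A 1 1 - (A 2 2 - e)) / 2, A 1 2, (A 1 1 + (A 2 2 - e)) / 2]], ⟨?_, trivial⟩, ?_⟩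
    · intro l
      fin_cases l
      · exact mem_lorentzCone_of_binary ha he0 hae
      · exact mem_lorentzCone_of_binary hc he2 hce
    · ext i j
      fin_cases i <;> fin_cases j <;> simp [glue, h01, hsym 1 0, hsym 2 0, hsym 2 1] <;> ring
  · rintro _ ⟨x, ⟨hx, -⟩, rfl⟩
    constructor
    · refine .of_dotProduct_mulVec_nonneg ?_ fun z => ?_
      · ext i j
        fin_cases i <;> fin_cases j <;> simp [glue]
      · have h0 := binary_form_nonneg (hx 0) (z 0) (z 2)
        have h1 := binary_form_nonneg (hx 1) (z 1) (z 2)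
        simp [glue, dotProduct, mulVec, Fin.sum_univ_three]
        nlinarith
    · simp [glue, hyperbolicPlane, trace, Fin.sum_univ_three]

/-! ### Reduction to normal form by congruence -/

/-- Slices of congruent matrices are linear images of each other. -/
lemma image_sliceOrth_congr (B P : Matrix (Fin 3) (Fin 3) ℝ) (hP : IsUnit P.det) :
    (LinearMap.mulLeftRight ℝ (P, Pᵀ)) '' sliceOrth 3 (Pᵀ * B * P) = sliceOrth 3 B := by
  have hPt : IsUnit Pᵀ.det := by rwa [det_transpose]
  apply Set.Subset.antisymm
  · rintro _ ⟨A, ⟨hA, htr⟩, rfl⟩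
    rw [LinearMap.mulLeftRight_apply]
    refine ⟨by simpa using hA.mul_mul_conjTranspose_same P, ?_⟩
    rw [← htr, trace_mul_comm A, mul_assoc, mul_assoc, trace_mul_comm P]
    simp only [mul_assoc]
    rw [trace_mul_comm A]
    simp only [mul_assoc]
  · rintro A ⟨hA, htr⟩
    have key : P * (P⁻¹ * A * (P⁻¹)ᵀ) * Pᵀ = A := by
      rw [transpose_nonsing_inv]
      simp only [mul_assoc]
      rw [nonsing_inv_mul _ hPt, mul_one, mul_nonsing_inv_cancel_left _ _ hP]
    refine ⟨P⁻¹ * A * (P⁻¹)ᵀ, ⟨by simpa using hA.mul_mul_conjTranspose_same P⁻¹, ?_⟩, ?_⟩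
    · rw [← htr]
      conv_rhs => rw [← key]
      simp only [mul_assoc]
      rw [trace_mul_comm P]
      simp only [mul_assoc]
    · rw [LinearMap.mulLeftRight_apply, key]

lemma isSOCR_congr (B P : Matrix (Fin 3) (Fin 3) ℝ) (hP : IsUnit P.det) :
    IsSOCR (sliceOrth 3 (Pᵀ * B * P)) ↔ IsSOCR (sliceOrth 3 B) := by
  constructor
  · intro h
    rw [← image_sliceOrth_congr B P hP]
    exact h.image _
  · intro h
    have hP' : IsUnit P⁻¹.det := by simpa [det_nonsing_inv] using hP
    rw [← image_sliceOrth_congr (Pᵀ * B * P) P⁻¹ hP']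
    have hPt : IsUnit Pᵀ.det := by rwa [det_transpose]
    have : (P⁻¹)ᵀ * (Pᵀ * B * P) * P⁻¹ = B := by
      rw [transpose_nonsing_inv]
      simp only [mul_assoc]
      rw [mul_nonsing_inv _ hP, mul_one, nonsing_inv_mul_cancel_left _ _ hPt]
    rw [this]
    exact h.image _

/-- The hyperbolic plane and `diagonal ![1, -1, 0]` are congruent. -/
lemma isSOCR_diagonal_zero : IsSOCR (sliceOrth 3 (diagonal ![1, -1, 0])) := by
  have hdet : IsUnit (!![1, 1, 0; 1, -1, 0; 0, 0, 1] : Matrix (Fin 3) (Fin 3) ℝ).det := by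
    simp [det_fin_three]
    norm_num
  rw [← isSOCR_congr _ _ hdet]
  convert isSOCR_hyperbolicPlane using 2
  ext i j
  fin_cases i <;> fin_cases j <;>
    simp [hyperbolicPlane, mul_apply, Fin.sum_univ_three, diagonal] <;> norm_num

/-- Sylvester normal form of an indefinite symmetric matrix, with a positive entry first and a
negative entry second. -/
lemma exists_normal_form {B : Matrix (Fin 3) (Fin 3) ℝ} (hsymm : B.IsSymm)
    (hind : Indefinite 3 B) :
    ∃ P : Matrix (Fin 3) (Fin 3) ℝ, IsUnit P.det ∧ ∃ c : ℝ, (c = 0 ∨ c = 1 ∨ c = -1) ∧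
      Pᵀ * B * P = diagonal ![1, -1, c] := by
  have hB : B.IsHermitian := by simpa [IsHermitian] using hsymm.eq
  obtain ⟨U, w, hU, hBU⟩ : ∃ (U : Matrix (Fin 3) (Fin 3) ℝ) (w : Fin 3 → ℝ),
      Uᵀ * U = 1 ∧ B = U * diagonal w * Uᵀ := by
    refine ⟨hB.eigenvectorUnitary, hB.eigenvalues, ?_, ?_⟩
    · simpa [star_eq_conjTranspose] using Unitary.coe_star_mul_self hB.eigenvectorUnitary
    · simpa [Unitary.conjStarAlgAut_apply, star_eq_conjTranspose, Function.comp_def]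
        using hB.spectral_theorem
  obtain ⟨i, hi⟩ : ∃ i, 0 < w i := by
    by_contra! h
    apply hind.2
    have hd : (diagonal (-w)).PosSemidef := PosSemidef.diagonal fun i => by simpa using h i
    have : -B = U * diagonal (-w) * Uᵀ := by
      rw [hBU, ← neg_mul, ← mul_neg, diagonal_neg]
      rfl
    rw [this]
    simpa using hd.mul_mul_conjTranspose_same U
  obtain ⟨j, hj⟩ : ∃ j, w j < 0 := by
    by_contra! h
    apply hind.1
    have hd : (diagonal w).PosSemidef := PosSemidef.diagonal h
    rw [hBU]
    simpa using hd.mul_mul_conjTranspose_same U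
  have hij : i ≠ j := by
    rintro rfl
    exact lt_asymm hi hj
  obtain ⟨σ, rfl, rfl⟩ : ∃ σ : Equiv.Perm (Fin 3), σ 0 = i ∧ σ 1 = j := by
    clear hi hj
    revert i j
    decide
  -- Scale the eigenvectors of nonzero eigenvalue `w i` by `|w i| ^ (-1/2)`.
  have hscale : ∀ a : ℝ, ∃ r : ℝ, r ≠ 0 ∧ r * a * r = SignType.sign a := by
    intro a
    rcases eq_or_ne a 0 with rfl | ha
    · exact ⟨1, one_ne_zero, by simp⟩
    · have hs : Real.sqrt |a| ≠ 0 := (Real.sqrt_pos.2 (abs_pos.2 ha)).ne'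
      refine ⟨(Real.sqrt |a|)⁻¹, inv_ne_zero hs, ?_⟩
      have h2 : Real.sqrt |a| * Real.sqrt |a| = |a| := Real.mul_self_sqrt (abs_nonneg a)
      field_simp
      rw [pow_two, h2, mul_comm, sign_mul_abs]
  choose r hr0 hr using hscale
  refine ⟨(U * diagonal (fun l => r (w l))).submatrix id σ, ?_, (SignType.sign (w (σ 2)) : ℝ),
    ?_, ?_⟩
  · rw [det_permute', det_mul, det_diagonal, isUnit_iff_ne_zero]
    have hUd : U.det ≠ 0 := by
      intro h
      have := congrArg det hU
      simp [h] at this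
    refine mul_ne_zero (by simp) (mul_ne_zero hUd (Finset.prod_ne_zero_iff.2 fun l _ => hr0 _))
  · rcases lt_trichotomy (w (σ 2)) 0 with h | h | h <;> simp [h]
  · have h1 : ((U * diagonal (fun l => r (w l))).submatrix id σ)ᵀ * B *
        (U * diagonal (fun l => r (w l))).submatrix id σ =
        ((U * diagonal (fun l => r (w l)))ᵀ * B * (U * diagonal (fun l => r (w l)))).submatrix
          σ σ := rfl
    have h2 : (U * diagonal (fun l => r (w l)))ᵀ * B * (U * diagonal (fun l => r (w l))) =
        diagonal (fun l => (SignType.sign (w l) : ℝ)) := by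
      calc _ = diagonal (fun l => r (w l)) * (Uᵀ * U) * diagonal w * (Uᵀ * U) *
            diagonal (fun l => r (w l)) := by
              rw [hBU, transpose_mul, diagonal_transpose]
              simp only [mul_assoc]
        _ = _ := by
              rw [hU, mul_one, mul_one, diagonal_mul_diagonal, diagonal_mul_diagonal]
              simp only [hr]
    rw [h1, h2, submatrix_diagonal_equiv]
    congr 1
    ext l
    fin_cases l
    · simp [hi]
    · simp [hj]
    · simp

/-- For an indefinite symmetric `3 × 3` matrix `B`, the slice
`S_B = {A ∈ S₊³ : tr(AB) = 0}` is second-order cone representable if and only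
if `det B = 0`. -/
theorem socr_sliceOrth_iff_det_eq_zero (B : Matrix (Fin 3) (Fin 3) ℝ)
    (hsymm : B.IsSymm) (hind : Indefinite 3 B) :
    IsSOCR (sliceOrth 3 B) ↔ B.det = 0 := by
  obtain ⟨P, hP, c, hc, hPB⟩ := exists_normal_form hsymm hind
  have hdet : P.det * B.det * P.det = -c := by
    have := congrArg det hPB
    simpa [det_mul, det_diagonal, Fin.prod_univ_three] using this
  rw [← isSOCR_congr B P hP, hPB]
  have hiff : B.det = 0 ↔ c = 0 := by
    have h0 := hP.ne_zero
    constructor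
    · intro h
      simpa [h] using hdet.symm
    · rintro rfl
      simpa [h0] using hdet
  rw [hiff]
  rcases hc with rfl | rfl | rfl
  · exact iff_of_true isSOCR_diagonal_zero rfl
  · exact iff_of_false not_isSOCR_diagonal_one one_ne_zero
  · exact iff_of_false not_isSOCR_diagonal_neg_one (by norm_num)
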